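/- Fix d ≥ 2 and let μ denote the normalized Haar probability measure on the group U(d) of d×d complex unitary matrices. For any d×d complex matrices A, B and C with Tr[C] = 0, the integral over U ∈ U(d) of Tr[U A U† C] · Tr[U B U† C] equals (Tr[AB] − Tr[A]·Tr[B]/d) · Tr[C²] / (d² − 1). -/

import Mathlib

open Matrix MeasureTheory

/-!
Averaging `Tr[U A U† C] · Tr[U B U† D]` over `U` gives a bilinear form in `(C, D)` which, by
invariance of the measure, is unchanged when `C` and `D` are conjugated by the same unitary.
Such a form is a combination of `Tr[C D]` and `Tr[C] Tr[D]`: sign changes and permutations of the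
basis settle the case of a diagonal `C`, the spectral theorem passes to Hermitian `C`, and Hermitian
matrices span. The two coefficients follow by evaluating the form at the pair `(1, 1)` and summing
it over the pairs `(E i j, E j i)` of matrix units, where the integrands are the constants
`Tr[A] Tr[B]` and `Tr[A B]`.
-/

open Unitary (conjStarAlgAut)

section MatrixUnit

theorem single_eq_smul_single_one {m n R : Type*} [DecidableEq m] [DecidableEq n]
    [MulZeroOneClass R] (i : m) (j : n) (c : R) : single i j c = c • single i j 1 := by
  rw [smul_single, smul_eq_mul, mul_one]

variable {n : Type*} [Fintype n] [DecidableEq n]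

theorem trace_single_eq_ite {R : Type*} [AddCommMonoid R] (i j : n) (c : R) :
    (single i j c).trace = if i = j then c else 0 := by
  split_ifs with hij
  · rw [hij, trace_single_eq_same]
  · exact trace_single_eq_of_ne i j c hij

theorem sum_trace_mul_single_mul_trace_mul_single {R : Type*} [CommSemiring R]
    (X Y : Matrix n n R) :
    ∑ i, ∑ j, (X * single i j 1).trace * (Y * single j i 1).trace = (X * Y).trace := by
  simp only [trace_mul_single, MulOpposite.op_one, one_smul]
  simpa only [trace, diag_apply, mul_apply] using
    Finset.sum_comm (f := fun i j => X j i * Y i j)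

end MatrixUnit

section Conjugation

variable {n : Type*} [Fintype n] [DecidableEq n] {R : Type*} [CommRing R] [StarRing R]

theorem trace_conjStarAlgAut (U : unitaryGroup n R) (A : Matrix n n R) :
    (conjStarAlgAut R _ U A).trace = A.trace := by
  rw [Unitary.conjStarAlgAut_apply, trace_mul_cycle, UnitaryGroup.star_mul_self, Matrix.one_mul]

theorem trace_conjStarAlgAut_mul (U : unitaryGroup n R) (A C : Matrix n n R) :
    (conjStarAlgAut R _ U A * C).trace = (A * conjStarAlgAut R _ U⁻¹ C).trace := by
  rw [← trace_conjStarAlgAut U⁻¹, map_mul, ← Unitary.conjStarAlgAut_mul_apply, inv_mul_cancel,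
    map_one, StarAlgEquiv.one_apply]

theorem diagonal_mem_unitaryGroup {v : n → R} (hv : ∀ i, v i ∈ unitary R) :
    diagonal v ∈ unitaryGroup n R := by
  rw [mem_unitaryGroup_iff, star_eq_conjTranspose, diagonal_conjTranspose, diagonal_mul_diagonal,
    ← diagonal_one]
  exact congrArg diagonal (funext fun i => Unitary.mul_star_self_of_mem (hv i))

theorem permMatrix_mem_unitaryGroup (σ : Equiv.Perm n) :
    σ.permMatrix R ∈ unitaryGroup n R := by
  rw [mem_unitaryGroup_iff, star_eq_conjTranspose, conjTranspose_permMatrix, ← permMatrix_mul,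
    inv_mul_cancel, permMatrix_one]

end Conjugation

section InvariantForm

variable {n : Type*} [Fintype n] [DecidableEq n]

/-- Invariance of a bilinear form on complex matrices under simultaneous conjugation of both
arguments by a unitary matrix. -/
def IsUnitarilyInvariant (β : LinearMap.BilinForm ℂ (Matrix n n ℂ)) : Prop :=
  ∀ (U : unitaryGroup n ℂ) (C D : Matrix n n ℂ),
    β (conjStarAlgAut ℂ _ U C) (conjStarAlgAut ℂ _ U D) = β C D

namespace IsUnitarilyInvariant

variable {β : LinearMap.BilinForm ℂ (Matrix n n ℂ)}

theorem apply_single_single_of_ne (hβ : IsUnitarilyInvariant β) (i : n) {j k : n} (hjk : j ≠ k) :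
    β (single i i 1) (single j k 1) = 0 := by
  let v : n → ℂ := Function.update 1 j (-1)
  have hv (l : n) : v l ∈ unitary ℂ := by
    by_cases h : l = j <;> simp [v, h, Unitary.mem_iff]
  let V : unitaryGroup n ℂ := ⟨diagonal v, diagonal_mem_unitaryGroup hv⟩
  have conj_single (l m : n) :
      conjStarAlgAut ℂ _ V (single l m 1) = (v l * star (v m)) • single l m (1 : ℂ) := by
    ext p q
    simp only [V, Unitary.conjStarAlgAut_apply, star_eq_conjTranspose, diagonal_conjTranspose,
      mul_diagonal, diagonal_mul, Matrix.smul_apply, single_apply, smul_eq_mul, Pi.star_apply]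
    grind
  have hjk_neg := hβ V (single i i 1) (single j k 1)
  rw [conj_single, conj_single, Unitary.mul_star_self_of_mem (hv i), one_smul] at hjk_neg
  simpa [v, hjk.symm, self_eq_neg] using hjk_neg.symm

theorem apply_single_single_perm (hβ : IsUnitarilyInvariant β) (σ : Equiv.Perm n) (i j : n) :
    β (single (σ i) (σ i) 1) (single (σ j) (σ j) 1) = β (single i i 1) (single j j 1) := by
  have conj_single (l : n) :
      conjStarAlgAut ℂ _ (⟨_, permMatrix_mem_unitaryGroup σ⁻¹⟩ : unitaryGroup n ℂ)
        (single l l 1) = single (σ l) (σ l) 1 := by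
    rw [Unitary.conjStarAlgAut_apply, star_eq_conjTranspose, conjTranspose_permMatrix,
      PEquiv.toMatrix_toPEquiv_mul, PEquiv.mul_toMatrix_toPEquiv, submatrix_submatrix]
    exact submatrix_single_equiv σ⁻¹ σ⁻¹ l l 1
  rw [← conj_single, ← conj_single, hβ]

theorem exists_apply_single_single (hβ : IsUnitarilyInvariant β) :
    ∃ x y : ℂ, ∀ i j : n, β (single i i 1) (single j j 1) = (if i = j then x else 0) + y := by
  obtain ⟨z, hz⟩ : ∃ z, ∀ i : n, β (single i i 1) (single i i 1) = z := by
    cases isEmpty_or_nonempty n with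
    | inl _ => exact ⟨0, isEmptyElim⟩
    | inr h =>
      obtain ⟨i₀⟩ := h
      refine ⟨β (single i₀ i₀ 1) (single i₀ i₀ 1), fun i => ?_⟩
      simpa using hβ.apply_single_single_perm (Equiv.swap i₀ i) i₀ i₀
  obtain ⟨y, hy⟩ : ∃ y, ∀ i j : n, i ≠ j → β (single i i 1) (single j j 1) = y := by
    cases subsingleton_or_nontrivial n with
    | inl _ => exact ⟨0, fun i j hij => (hij (Subsingleton.elim i j)).elim⟩
    | inr _ =>
      obtain ⟨i₀, j₀, h₀⟩ := exists_pair_ne n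
      refine ⟨β (single i₀ i₀ 1) (single j₀ j₀ 1), fun i j hij => ?_⟩
      obtain ⟨σ, rfl, rfl⟩ := MulAction.is_two_pretransitive_iff.mp
        (Equiv.Perm.isMultiplyPretransitive n 2) h₀ hij
      exact hβ.apply_single_single_perm σ i₀ j₀
  refine ⟨z - y, y, fun i j => ?_⟩
  split_ifs with hij
  · rw [← hij, hz, sub_add_cancel]
  · rw [hy i j hij, zero_add]

theorem exists_apply_diagonal (hβ : IsUnitarilyInvariant β) :
    ∃ x y : ℂ, ∀ v D, β (diagonal v) D =
      x * (diagonal v * D).trace + y * ((diagonal v).trace * D.trace) := by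
  obtain ⟨x, y, hxy⟩ := hβ.exists_apply_single_single
  have apply_single (i : n) (D : Matrix n n ℂ) :
      β (single i i 1) D = x * D i i + y * D.trace := by
    induction D using Matrix.induction_on' with
    | h_zero => simp
    | h_add C D hC hD => rw [map_add, hC, hD, Matrix.add_apply, trace_add]; ring
    | h_std_basis j k c =>
      rw [single_eq_smul_single_one j k c, map_smul, Matrix.smul_apply, trace_smul,
        trace_single_eq_ite, single_apply]
      simp only [smul_eq_mul]
      obtain rfl | hjk := eq_or_ne j k
      · rw [hxy]
        grind
      · rw [hβ.apply_single_single_of_ne i hjk]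
        grind
  refine ⟨x, y, fun v D => ?_⟩
  calc β (diagonal v) D
    _ = ∑ i, v i * β (single i i 1) D := by
      simp only [← sum_single_eq_diagonal, map_sum, LinearMap.sum_apply,
        single_eq_smul_single_one _ _ (v _), map_smul, LinearMap.smul_apply, smul_eq_mul]
    _ = x * ∑ i, v i * D i i + y * ((∑ i, v i) * D.trace) := by
      simp only [apply_single, mul_add, Finset.sum_add_distrib, Finset.mul_sum, Finset.sum_mul,
        mul_left_comm]
    _ = x * (diagonal v * D).trace + y * ((diagonal v).trace * D.trace) := by
      simp only [trace, diag_apply, diagonal_mul, diagonal_apply_eq]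

theorem exists_apply_eq_trace (hβ : IsUnitarilyInvariant β) :
    ∃ x y : ℂ, ∀ C D, β C D = x * (C * D).trace + y * (C.trace * D.trace) := by
  obtain ⟨x, y, apply_diagonal⟩ := hβ.exists_apply_diagonal
  have apply_isHermitian {C : Matrix n n ℂ} (hC : C.IsHermitian) (D : Matrix n n ℂ) :
      β C D = x * (C * D).trace + y * (C.trace * D.trace) := by
    rw [hC.spectral_theorem]
    set U := hC.eigenvectorUnitary
    rw [← hβ U⁻¹, ← Unitary.conjStarAlgAut_mul_apply, inv_mul_cancel, map_one,
      StarAlgEquiv.one_apply, apply_diagonal, trace_conjStarAlgAut, trace_conjStarAlgAut,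
      trace_conjStarAlgAut_mul]
  refine ⟨x, y, fun C D => ?_⟩
  rw [← realPart_add_I_smul_imaginaryPart C, map_add, map_smul, LinearMap.add_apply,
    LinearMap.smul_apply, apply_isHermitian (realPart C).2, apply_isHermitian (imaginaryPart C).2]
  simp only [Matrix.add_mul, smul_mul, trace_add, trace_smul, smul_eq_mul]
  ring

theorem apply_eq_trace [Nontrivial n] (hβ : IsUnitarilyInvariant β) (C D : Matrix n n ℂ) :
    β C D = ((β 1 1 - (∑ i, ∑ j, β (single i j 1) (single j i 1)) / Fintype.card n) *
        (C.trace * D.trace) +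
      (∑ i, ∑ j, β (single i j 1) (single j i 1) - β 1 1 / Fintype.card n) * (C * D).trace) /
        ((Fintype.card n : ℂ) ^ 2 - 1) := by
  obtain ⟨x, y, hxy⟩ := hβ.exists_apply_eq_trace
  have card_ne_zero : (Fintype.card n : ℂ) ≠ 0 := Nat.cast_ne_zero.mpr Fintype.card_ne_zero
  have card_sq_sub_one_ne_zero : (Fintype.card n : ℂ) ^ 2 - 1 ≠ 0 := by
    rw [sub_ne_zero]
    exact_mod_cast (Nat.one_lt_pow two_ne_zero Fintype.one_lt_card).ne'
  have apply_one_one : β 1 1 = x * Fintype.card n + y * Fintype.card n ^ 2 := by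
    rw [hxy, Matrix.one_mul, trace_one, sq]
  have sum_apply_single : ∑ i, ∑ j, β (single i j 1) (single j i 1) =
      x * Fintype.card n ^ 2 + y * Fintype.card n := by
    simp only [hxy, single_mul_single_same, mul_one, trace_single_eq_same, trace_single_eq_ite,
      mul_ite, mul_zero, Finset.sum_add_distrib, Finset.sum_const, Finset.card_univ, nsmul_eq_mul,
      Finset.sum_ite_eq', Finset.mem_univ, if_true]
    ring
  rw [apply_one_one, sum_apply_single, hxy]
  field_simp
  ring

end IsUnitarilyInvariant

end InvariantForm

section Haar

theorem compactSpace_unitaryGroup (n 𝕜 : Type*) [Fintype n] [DecidableEq n] [RCLike 𝕜] :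
    CompactSpace (unitaryGroup n 𝕜) := by
  have isClosed_unitaryGroup : IsClosed (unitaryGroup n 𝕜 : Set (Matrix n n 𝕜)) := isClosed_unitary
  open scoped Matrix.Norms.Elementwise in
  exact isCompact_iff_compactSpace.mp <| Metric.isCompact_of_isClosed_isBounded
    isClosed_unitaryGroup <| isBounded_iff_forall_norm_le.mpr
      ⟨1, fun _ => entrywise_sup_norm_bound_of_unitary⟩

variable {n : Type*} [Fintype n] [DecidableEq n]
  [MeasurableSpace (unitaryGroup n ℂ)] [BorelSpace (unitaryGroup n ℂ)]
  (μ : Measure (unitaryGroup n ℂ)) (A B : Matrix n n ℂ)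

theorem integrable_trace_conjStarAlgAut_mul [IsFiniteMeasure μ] (C D : Matrix n n ℂ) :
    Integrable (fun U => (conjStarAlgAut ℂ _ U A * C).trace * (conjStarAlgAut ℂ _ U B * D).trace)
      μ := by
  have := compactSpace_unitaryGroup n ℂ
  refine Continuous.integrable_of_hasCompactSupport ?_ (HasCompactSupport.of_compactSpace _)
  simp only [Unitary.conjStarAlgAut_apply]
  fun_prop

/-- The bilinear form `(C, D) ↦ ∫ Tr[U A U† C] · Tr[U B U† D] dμ(U)`. -/
noncomputable def twirledTraceForm [IsFiniteMeasure μ] : LinearMap.BilinForm ℂ (Matrix n n ℂ) :=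
  LinearMap.mk₂ ℂ
    (fun C D => ∫ U, (conjStarAlgAut ℂ _ U A * C).trace * (conjStarAlgAut ℂ _ U B * D).trace ∂μ)
    (fun C C' D => by
      simp only [mul_add, trace_add, add_mul]
      exact integral_add (integrable_trace_conjStarAlgAut_mul μ A B C D)
        (integrable_trace_conjStarAlgAut_mul μ A B C' D))
    (fun c C D => by
      simp only [mul_smul_comm, trace_smul, smul_mul_assoc]
      exact integral_smul c _)
    (fun C D D' => by
      simp only [trace_add, mul_add]
      exact integral_add (integrable_trace_conjStarAlgAut_mul μ A B C D)
        (integrable_trace_conjStarAlgAut_mul μ A B C D'))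
    (fun c C D => by
      simp only [trace_smul, mul_smul_comm]
      exact integral_smul c _)

theorem twirledTraceForm_apply [IsFiniteMeasure μ] (C D : Matrix n n ℂ) :
    twirledTraceForm μ A B C D =
      ∫ U, (conjStarAlgAut ℂ _ U A * C).trace * (conjStarAlgAut ℂ _ U B * D).trace ∂μ :=
  rfl

theorem isUnitarilyInvariant_twirledTraceForm [IsFiniteMeasure μ] [μ.IsMulLeftInvariant] :
    IsUnitarilyInvariant (twirledTraceForm μ A B) := by
  intro V C D
  have trace_conj_mul_conj (M E : Matrix n n ℂ) (U : unitaryGroup n ℂ) :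
      (conjStarAlgAut ℂ _ U M * conjStarAlgAut ℂ _ V E).trace =
        (conjStarAlgAut ℂ _ (V⁻¹ * U) M * E).trace := by
    rw [Unitary.conjStarAlgAut_mul_apply, trace_conjStarAlgAut_mul V⁻¹, inv_inv]
  simp only [twirledTraceForm_apply, trace_conj_mul_conj]
  exact integral_mul_left_eq_self
    (fun U => (conjStarAlgAut ℂ _ U A * C).trace * (conjStarAlgAut ℂ _ U B * D).trace) V⁻¹

theorem twirledTraceForm_one_one [IsProbabilityMeasure μ] :
    twirledTraceForm μ A B 1 1 = A.trace * B.trace := by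
  simp only [twirledTraceForm_apply, Matrix.mul_one, trace_conjStarAlgAut, integral_const,
    probReal_univ, one_smul]

theorem sum_twirledTraceForm_single [IsProbabilityMeasure μ] :
    ∑ i, ∑ j, twirledTraceForm μ A B (single i j 1) (single j i 1) = (A * B).trace := by
  have integrable_single (i j : n) :=
    integrable_trace_conjStarAlgAut_mul μ A B (single i j 1) (single j i 1)
  calc ∑ i, ∑ j, twirledTraceForm μ A B (single i j 1) (single j i 1)
    _ = ∫ U, ∑ i, ∑ j, (conjStarAlgAut ℂ _ U A * single i j 1).trace *
          (conjStarAlgAut ℂ _ U B * single j i 1).trace ∂μ := by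
      rw [integral_finsetSum _ fun i _ => integrable_finsetSum _ fun j _ => integrable_single i j]
      exact Finset.sum_congr rfl fun i _ =>
        (integral_finsetSum _ fun j _ => integrable_single i j).symm
    _ = ∫ _, (A * B).trace ∂μ := by
      simp only [sum_trace_mul_single_mul_trace_mul_single, ← map_mul, trace_conjStarAlgAut]
    _ = (A * B).trace := by rw [integral_const, probReal_univ, one_smul]

theorem haar_product_of_traces_general [Nontrivial n] [μ.IsMulLeftInvariant]
    [IsProbabilityMeasure μ] (C D : Matrix n n ℂ) :
    ∫ U : unitaryGroup n ℂ, ((U : Matrix n n ℂ) * A * (U : Matrix n n ℂ)ᴴ * C).trace *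
        ((U : Matrix n n ℂ) * B * (U : Matrix n n ℂ)ᴴ * D).trace ∂μ =
      ((A.trace * B.trace - (A * B).trace / Fintype.card n) * (C.trace * D.trace) +
        ((A * B).trace - A.trace * B.trace / Fintype.card n) * (C * D).trace) /
          ((Fintype.card n : ℂ) ^ 2 - 1) := by
  have := (isUnitarilyInvariant_twirledTraceForm μ A B).apply_eq_trace C D
  rwa [twirledTraceForm_one_one, sum_twirledTraceForm_single] at this

end Haar

/-- **Haar second-moment identity.** For `Tr[C] = 0`,
`∫ Tr[U A U† C]·Tr[U B U† C] dμ(U) = (Tr[AB] − Tr[A]Tr[B]/d)·Tr[C²]/(d²−1)`. -/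
theorem haar_product_of_traces (d : ℕ) (hd : 2 ≤ d)
    [MeasurableSpace (Matrix.unitaryGroup (Fin d) ℂ)]
    [BorelSpace (Matrix.unitaryGroup (Fin d) ℂ)]
    (μ : Measure (Matrix.unitaryGroup (Fin d) ℂ))
    [μ.IsHaarMeasure] [IsProbabilityMeasure μ]
    (A B C : Matrix (Fin d) (Fin d) ℂ) (hC : C.trace = 0) :
    (∫ U : Matrix.unitaryGroup (Fin d) ℂ,
        (((U : Matrix (Fin d) (Fin d) ℂ) * A * (U : Matrix (Fin d) (Fin d) ℂ)ᴴ * C).trace *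
          ((U : Matrix (Fin d) (Fin d) ℂ) * B * (U : Matrix (Fin d) (Fin d) ℂ)ᴴ * C).trace) ∂μ)
      = ((A * B).trace - A.trace * B.trace / (d : ℂ)) * (C * C).trace / ((d : ℂ) ^ 2 - 1) := by
  have := Fin.nontrivial_iff_two_le.mpr hd
  simpa [hC] using haar_product_of_traces_general μ A B C C
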